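/- Let d ≥ 1, N ≥ 2, and let ψ_1, …, ψ_N be unit vectors in ℂ^d. Set σ_i := ψ_i ψ_i* (the rank-one orthogonal projection onto the span of ψ_i). Then 1 − P_succ((σ_i)_{i∈{1,…,N}}) ≥ (1/N)·(1 − √(1 − max_{i≠j} |⟨ψ_i, ψ_j⟩|²)). -/

import Mathlib

open Matrix
open scoped ComplexOrder

/-- Optimal single-copy success probability, with uniform priors, of discriminating
the states `(σ i)_{i ∈ T}`. -/
noncomputable def Psucc {d N : ℕ} (T : Finset (Fin N))
    (σ : Fin N → Matrix (Fin d) (Fin d) ℂ) : ℝ :=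
  sSup {x : ℝ | ∃ Λ : Fin N → Matrix (Fin d) (Fin d) ℂ,
    (∀ i ∈ T, (Λ i).PosSemidef) ∧ (∑ i ∈ T, Λ i) = (1 : Matrix (Fin d) (Fin d) ℂ) ∧
    x = ((T.card : ℝ))⁻¹ * ∑ i ∈ T, ((Λ i * σ i).trace).re}

open scoped MatrixOrder in
lemma aux_cs {d : ℕ} (E : Matrix (Fin d) (Fin d) ℂ) (hE : E.PosSemidef) (a b : Fin d → ℂ) :
    ‖star a ⬝ᵥ (E *ᵥ b)‖ ^ 2 ≤ (star a ⬝ᵥ (E *ᵥ a)).re * (star b ⬝ᵥ (E *ᵥ b)).re := by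
  obtain ⟨B, rfl⟩ := CStarAlgebra.nonneg_iff_eq_star_mul_self.mp hE.nonneg
  rw [Matrix.star_eq_conjTranspose]
  have key : ∀ u v : Fin d → ℂ, star u ⬝ᵥ ((Bᴴ * B) *ᵥ v) =
      inner ℂ (WithLp.toLp 2 (B *ᵥ u)) (WithLp.toLp 2 (B *ᵥ v)) := by
    intro u v
    rw [EuclideanSpace.inner_toLp_toLp, ← Matrix.mulVec_mulVec, Matrix.dotProduct_mulVec,
      ← Matrix.star_mulVec, dotProduct_comm]
  have hn : ∀ w : EuclideanSpace ℂ (Fin d), (inner ℂ w w).re = ‖w‖ ^ 2 := fun w =>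
    inner_self_eq_norm_sq (𝕜 := ℂ) w
  rw [key, key, key, hn, hn, ← mul_pow]
  exact pow_le_pow_left₀ (norm_nonneg _) (norm_inner_le_norm _ _) 2

lemma aux_nn {d : ℕ} (E : Matrix (Fin d) (Fin d) ℂ) (hE : E.PosSemidef) (a : Fin d → ℂ) :
    0 ≤ (star a ⬝ᵥ (E *ᵥ a)).re := by
  have := hE.dotProduct_mulVec_nonneg a
  exact (Complex.le_def.mp this).1

lemma aux_two {d : ℕ} (E : Matrix (Fin d) (Fin d) ℂ) (hE : E.PosSemidef)
    (hE' : (1 - E).PosSemidef) (a b : Fin d → ℂ) (ha : star a ⬝ᵥ a = 1) (hb : star b ⬝ᵥ b = 1) :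
    (star a ⬝ᵥ (E *ᵥ a)).re - (star b ⬝ᵥ (E *ᵥ b)).re ≤ √(1 - ‖star a ⬝ᵥ b‖ ^ 2) := by
  have h1 := aux_cs E hE a b
  have h2 := aux_cs _ hE' a b
  have hx := aux_nn E hE a
  have hy := aux_nn E hE b
  have hx' := aux_nn _ hE' a
  have hy' := aux_nn _ hE' b
  have hs : ∀ u v : Fin d → ℂ, star u ⬝ᵥ ((1 - E) *ᵥ v) = star u ⬝ᵥ v - star u ⬝ᵥ (E *ᵥ v) := by
    intro u v
    rw [Matrix.sub_mulVec, Matrix.one_mulVec, dotProduct_sub]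
  rw [hs, hs, hs, ha, hb] at h2
  rw [hs, ha] at hx'
  rw [hs, hb] at hy'
  simp only [Complex.sub_re, Complex.one_re] at h2 hx' hy'
  have h3 : ‖star a ⬝ᵥ b‖ ≤ ‖star a ⬝ᵥ (E *ᵥ b)‖ + ‖star a ⬝ᵥ b - star a ⬝ᵥ (E *ᵥ b)‖ := by
    have := norm_add_le (star a ⬝ᵥ (E *ᵥ b)) (star a ⬝ᵥ b - star a ⬝ᵥ (E *ᵥ b))
    simpa using this
  have hc := norm_nonneg (star a ⬝ᵥ b)
  have hu := norm_nonneg (star a ⬝ᵥ (E *ᵥ b))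
  have hv := norm_nonneg (star a ⬝ᵥ b - star a ⬝ᵥ (E *ᵥ b))
  generalize ‖star a ⬝ᵥ (E *ᵥ b)‖ = u at *
  generalize ‖star a ⬝ᵥ b - star a ⬝ᵥ (E *ᵥ b)‖ = v at *
  generalize ‖star a ⬝ᵥ b‖ = c at *
  generalize (star a ⬝ᵥ (E *ᵥ a)).re = x at *
  generalize (star b ⬝ᵥ (E *ᵥ b)).re = y at *
  apply Real.le_sqrt_of_sq_le
  have h4 : c ^ 2 ≤ (u + v) ^ 2 := pow_le_pow_left₀ hc h3 2
  have h5 : 2 * (u * v) ≤ x * (1 - x) + y * (1 - y) := by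
    refine (sq_le_sq₀ (by positivity) (by positivity)).mp ?_
    have : u ^ 2 * v ^ 2 ≤ (x * y) * ((1 - x) * (1 - y)) :=
      mul_le_mul h1 h2 (by positivity) (by positivity)
    nlinarith [sq_nonneg (x * (1 - x) - y * (1 - y))]
  nlinarith

theorem stmt_2 {d N : ℕ} (hd : 1 ≤ d) (hN : 2 ≤ N)
    (ψ : Fin N → (Fin d → ℂ)) (hψ : ∀ i, star (ψ i) ⬝ᵥ ψ i = 1) :
    1 / (N : ℝ) *
        (1 - Real.sqrt (1 - ⨆ p : {p : Fin N × Fin N // p.1 ≠ p.2},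
          ‖star (ψ p.1.1) ⬝ᵥ ψ p.1.2‖ ^ 2)) ≤
      1 - Psucc Finset.univ (fun i => Matrix.vecMulVec (ψ i) (star (ψ i))) := by
  set S : ℝ := ⨆ p : {p : Fin N × Fin N // p.1 ≠ p.2}, ‖star (ψ p.1.1) ⬝ᵥ ψ p.1.2‖ ^ 2 with hS
  have hNpos : (0 : ℝ) < N := by exact_mod_cast (by omega : 0 < N)
  have hN2 : (2 : ℝ) ≤ N := by exact_mod_cast hN
  haveI : Nonempty {p : Fin N × Fin N // p.1 ≠ p.2} :=
    ⟨⟨(⟨0, by omega⟩, ⟨1, by omega⟩), by simp⟩⟩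
  obtain ⟨⟨⟨i, j⟩, hij⟩, hp⟩ := exists_eq_ciSup_of_finite
    (f := fun p : {p : Fin N × Fin N // p.1 ≠ p.2} => ‖star (ψ p.1.1) ⬝ᵥ ψ p.1.2‖ ^ 2)
  rw [← hS] at hp
  simp only at hp hij
  have hsq := Real.sqrt_nonneg (1 - S)
  have main : Psucc Finset.univ (fun i => Matrix.vecMulVec (ψ i) (star (ψ i))) ≤
      (N : ℝ)⁻¹ * (N - 1 + √(1 - S)) := by
    apply Real.sSup_le
    · rintro x ⟨Λ, hΛ, hsum, rfl⟩
      simp only [Finset.card_univ, Fintype.card_fin]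
      apply mul_le_mul_of_nonneg_left _ (by positivity)
      have htr : ∀ k, (Λ k * Matrix.vecMulVec (ψ k) (star (ψ k))).trace =
          star (ψ k) ⬝ᵥ (Λ k *ᵥ ψ k) := by
        intro k
        rw [Matrix.mul_vecMulVec, Matrix.trace_vecMulVec, dotProduct_comm]
      simp only [htr]
      have hP : ∀ k, (Λ k).PosSemidef := fun k => hΛ k (Finset.mem_univ k)
      have hone : ∀ k, ∑ l, (star (ψ k) ⬝ᵥ (Λ l *ᵥ ψ k)).re = 1 := by
        intro k
        rw [← Complex.re_sum, ← dotProduct_sum, ← Matrix.sum_mulVec, hsum, Matrix.one_mulVec, hψ]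
        simp
      have hle : ∀ k, (star (ψ k) ⬝ᵥ (Λ k *ᵥ ψ k)).re ≤ 1 := by
        intro k
        rw [← hone k]
        exact Finset.single_le_sum (f := fun l => (star (ψ k) ⬝ᵥ (Λ l *ᵥ ψ k)).re)
          (fun l _ => aux_nn _ (hP l) _) (Finset.mem_univ k)
      have hsub : (1 - Λ i).PosSemidef := by
        rw [← hsum, ← Finset.add_sum_erase _ _ (Finset.mem_univ i), add_sub_cancel_left]
        exact Matrix.posSemidef_sum _ fun k _ => hP k
      have h2 := aux_two (Λ i) (hP i) hsub (ψ i) (ψ j) (hψ i) (hψ j)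
      rw [hp] at h2
      have h3 : (star (ψ j) ⬝ᵥ (Λ i *ᵥ ψ j)).re + (star (ψ j) ⬝ᵥ (Λ j *ᵥ ψ j)).re ≤ 1 := by
        rw [← hone j, ← Finset.sum_pair (f := fun l => (star (ψ j) ⬝ᵥ (Λ l *ᵥ ψ j)).re) hij]
        exact Finset.sum_le_sum_of_subset_of_nonneg (Finset.subset_univ _)
          (fun l _ _ => aux_nn _ (hP l) _)
      have h4 : ∑ k ∈ {i, j}, (1 - (star (ψ k) ⬝ᵥ (Λ k *ᵥ ψ k)).re) ≤
          ∑ k, (1 - (star (ψ k) ⬝ᵥ (Λ k *ᵥ ψ k)).re) :=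
        Finset.sum_le_sum_of_subset_of_nonneg (Finset.subset_univ _)
          (fun l _ _ => sub_nonneg.mpr (hle l))
      rw [Finset.sum_pair hij, Finset.sum_sub_distrib] at h4
      simp only [Finset.sum_const, Finset.card_univ, Fintype.card_fin, nsmul_eq_mul, mul_one] at h4
      linarith
    · have : 0 ≤ (N : ℝ) - 1 + √(1 - S) := by linarith
      positivity
  have e : (N : ℝ)⁻¹ * (N - 1 + √(1 - S)) = 1 - 1 / N * (1 - √(1 - S)) := by
    field_simp
    ring
  linarith
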